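/- arXiv:0804.3948 — 2 statements merged into one kernel-verified Lean document; each statement's English description precedes it below -/
import Mathlib

section
/- Let A and B be n×n Hermitian positive semidefinite complex matrices with Tr(AB) > 0, and let k be a fixed nonnegative integer. Then there exists a natural number N (depending on A, B and k) such that for every m > N the coefficient of t^k in the polynomial Tr((A + tB)^m), namely Tr(S_{m,k}(A,B)), is strictly positive. -/
/-!
The case `k = 0` says that a nonzero positive semidefinite matrix has powers of positive trace.

For `k + 1`, diagonalize `A = diag(a)`. If `B i i = 0` then the `i`-th row and column of `B` vanish,
so `a i` may be replaced by `0` in every product where a power of `A` is adjacent to `B`. Let `l` be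
the largest of the remaining `a i`; it is positive because `Tr(AB) > 0`. Writing `A'` for the
modified matrix, `(A'/l)^m` tends to the projection `P` onto the coordinates where the value `l` is
attained. Splitting words at their leftmost letter `B`,
`S_{m,k+1} = ∑ A^(m-i) B S_{i,k}`, and a weighted Cesàro argument (`tendsto_conv`) gives by
induction on `k` that `S_{m,k+1} / (l^m * (m+k+1).choose (k+1))` tends to
`P (B P)^(k+1) = (P B P)^(k+1)`. The matrix `P B P` is positive semidefinite and nonzero,
so this limit has positive trace. Since `S_{m,k}` is Hermitian its trace is real, and positivity of
the limit yields positivity for all large `m`.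
-/

open Polynomial Matrix ComplexOrder

/-- `S p q A B` is the sum of all `(p+q).choose p` words in `A, B` with `p` letters `A` and
`q` letters `B`; equivalently, the coefficient of `t^q` in `(A + t B)^(p+q)`. -/
noncomputable def S {n : ℕ} (p q : ℕ) (A B : Matrix (Fin n) (Fin n) ℂ) :
    Matrix (Fin n) (Fin n) ℂ :=
  ((Polynomial.C A + Polynomial.X * Polynomial.C B) ^ (p + q)).coeff q

open Filter Topology Asymptotics Finset

/-! ### A weighted Cesàro theorem -/

/-- A weighted Cesàro theorem for convolutions: if `x m → X` and `y m / (m+k).choose k → Y`, then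
`(x * y) m / (m+k+1).choose (k+1) → X * Y`. -/
lemma tendsto_conv {R : Type*} [NormedRing R] [NormedAlgebra ℝ R] (k : ℕ) (x y : ℕ → R) (X Y : R)
    (hx : Tendsto x atTop (𝓝 X))
    (hy : Tendsto (fun m => ((m + k).choose k : ℝ)⁻¹ • y m) atTop (𝓝 Y)) :
    Tendsto (fun m => ((m + k + 1).choose (k + 1) : ℝ)⁻¹ •
      ∑ i ∈ range (m + 1), x (m - i) * y i) atTop (𝓝 (X * Y)) := by
  set c : ℕ → ℝ := fun i => ((i + k).choose k : ℝ) with hc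
  set G : ℕ → ℝ := fun m => ((m + k + 1).choose (k + 1) : ℝ) with hG
  have hcpos : ∀ i, 0 < c i := fun i => by
    have := Nat.choose_pos (Nat.le_add_left k i)
    simp only [hc]; exact_mod_cast this
  have hGpos : ∀ i, 0 < G i := fun i => by
    have : 0 < (i + k + 1).choose (k + 1) := Nat.choose_pos (by omega)
    simp only [hG]; exact_mod_cast this
  have hsum : ∀ m, ∑ i ∈ range (m + 1), c i = G m := fun m => by
    simp only [hc, hG]; exact_mod_cast Nat.sum_range_add_choose m k
  have hcone : ∀ i, 1 ≤ c i := fun i => by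
    have := Nat.choose_pos (Nat.le_add_left k i)
    simp only [hc]; exact_mod_cast this
  have hcmono : ∀ i m, i ≤ m → c i ≤ c m := fun i m h => by
    simp only [hc]; exact_mod_cast Nat.choose_le_choose k (by omega)
  have hGc : ∀ m : ℕ, ((m : ℝ) + 1) * c m ≤ (k + 1) * G m := fun m => by
    have h := Nat.add_one_mul_choose_eq (m + k) k
    have h' : ((m : ℝ) + k + 1) * c m = G m * (k + 1) := by
      simp only [hc, hG]; exact_mod_cast h
    nlinarith [hcpos m, (Nat.cast_nonneg k : (0 : ℝ) ≤ k)]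
  -- the error in `y`, relative to the weights
  have hyo : (fun m => y m - c m • Y) =o[atTop] c := by
    have h1 : (fun m => (c m)⁻¹ • y m - Y) =o[atTop] (fun _ => (1 : ℝ)) := by
      rw [isLittleO_one_iff]
      simpa using hy.sub_const Y
    have h2 := (isBigO_refl c atTop).smul_isLittleO h1
    refine (h2.congr (fun m => ?_) (fun m => ?_))
    · rw [smul_sub, smul_smul, mul_inv_cancel₀ (hcpos m).ne', one_smul]
    · simp
  have htop : Tendsto (fun m => ∑ i ∈ range m, c i) atTop atTop := by
    refine tendsto_atTop_mono (fun m => ?_) tendsto_natCast_atTop_atTop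
    calc (m : ℝ) = ∑ i ∈ range m, (1 : ℝ) := by simp
      _ ≤ _ := sum_le_sum fun i _ => hcone i
  have hy1 : (fun m => ∑ i ∈ range (m + 1), ‖y i - c i • Y‖) =o[atTop] G := by
    have := (hyo.norm_left.sum_range (fun i => (hcpos i).le) htop).comp_tendsto
      (tendsto_add_atTop_nat 1)
    exact this.congr (fun _ => rfl) hsum
  -- the unweighted Cesàro mean of the error in `x`
  have hx1 : (fun m => ∑ i ∈ range (m + 1), ‖x i - X‖) =o[atTop] (fun m : ℕ => (m : ℝ) + 1) := by
    have h1 : (fun m => x m - X) =o[atTop] (fun _ => (1 : ℝ)) := by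
      rw [isLittleO_one_iff]
      simpa using hx.sub_const X
    have := (h1.norm_left.sum_range (fun i => zero_le_one) (by
      simpa using tendsto_natCast_atTop_atTop)).comp_tendsto (tendsto_add_atTop_nat 1)
    exact this.congr (fun _ => rfl) (fun m => by simp)
  obtain ⟨M, hM⟩ := (Metric.isBounded_range_of_tendsto x hx).exists_norm_le
  have hM' : ∀ i, ‖x i‖ ≤ M := fun i => hM _ ⟨i, rfl⟩
  have e1 : (fun m => ∑ i ∈ range (m + 1), x (m - i) * (y i - c i • Y)) =o[atTop] G := by
    refine IsBigO.trans_isLittleO (IsBigO.of_bound M (Eventually.of_forall fun m => ?_)) hy1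
    rw [Real.norm_of_nonneg (sum_nonneg fun _ _ => norm_nonneg _), mul_sum]
    refine (norm_sum_le _ _).trans (sum_le_sum fun i _ => (norm_mul_le _ _).trans ?_)
    exact mul_le_mul_of_nonneg_right (hM' _) (norm_nonneg _)
  have e2 : (fun m => ∑ i ∈ range (m + 1), (x (m - i) - X) * (c i • Y)) =o[atTop] G := by
    have h3 : (fun m => c m * ∑ i ∈ range (m + 1), ‖x i - X‖) =o[atTop] G := by
      refine ((isBigO_refl c atTop).mul_isLittleO hx1).trans_isBigO
        (IsBigO.of_bound (k + 1) (Eventually.of_forall fun m => ?_))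
      rw [Real.norm_of_nonneg (by have := hcpos m; positivity), Real.norm_of_nonneg (hGpos m).le]
      linarith [hGc m]
    refine IsBigO.trans_isLittleO (IsBigO.of_bound ‖Y‖ (Eventually.of_forall fun m => ?_)) h3
    rw [Real.norm_of_nonneg
      (mul_nonneg (hcpos m).le (sum_nonneg fun _ _ => norm_nonneg _)),
      ← sum_range_reflect (fun i => ‖x i - X‖), mul_sum, mul_sum]
    refine (norm_sum_le _ _).trans (sum_le_sum fun i hi => (norm_mul_le _ _).trans ?_)
    rw [norm_smul, Real.norm_of_nonneg (hcpos i).le]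
    have hi' : m + 1 - 1 - i = m - i := by omega
    rw [hi']
    have := hcmono i m (by simp at hi; omega)
    calc ‖x (m - i) - X‖ * (c i * ‖Y‖) ≤ ‖x (m - i) - X‖ * (c m * ‖Y‖) := by gcongr
      _ = _ := by ring
  have e3 : (fun m => ∑ i ∈ range (m + 1), x (m - i) * y i - G m • (X * Y)) =o[atTop] G := by
    refine (e1.add e2).congr_left fun m => ?_
    rw [← hsum m, sum_smul, ← sum_add_distrib, ← sum_sub_distrib]
    refine sum_congr rfl fun i _ => ?_
    simp only [mul_sub, sub_mul, mul_smul_comm, smul_sub]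
    abel
  have e4 : Tendsto (fun m => (G m)⁻¹ • (∑ i ∈ range (m + 1), x (m - i) * y i - G m • (X * Y)))
      atTop (𝓝 0) := by
    rw [← isLittleO_one_iff ℝ]
    refine ((isBigO_refl (fun m => (G m)⁻¹) atTop).smul_isLittleO e3).congr_right fun m => ?_
    simp [(hGpos m).ne']
  have e5 := e4.add_const (X * Y)
  rw [zero_add] at e5
  refine e5.congr fun m => ?_
  rw [smul_sub, smul_smul, inv_mul_cancel₀ (hGpos m).ne', one_smul, sub_add_cancel]

/-! ### Recursions and symmetries of the word sums -/

section words

variable {n : ℕ} (A B : Matrix (Fin n) (Fin n) ℂ)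

lemma coeff_pow_succ (N q : ℕ) : ((C A + X * C B) ^ (N + 1)).coeff (q + 1) =
    A * ((C A + X * C B) ^ N).coeff (q + 1) + B * ((C A + X * C B) ^ N).coeff q := by
  rw [pow_succ', add_mul, coeff_add, coeff_C_mul, mul_assoc, coeff_X_mul, coeff_C_mul]

lemma coeff_pow_succ' (N q : ℕ) : ((C A + X * C B) ^ (N + 1)).coeff (q + 1) =
    ((C A + X * C B) ^ N).coeff (q + 1) * A + ((C A + X * C B) ^ N).coeff q * B := by
  rw [pow_succ, mul_add, coeff_add, coeff_mul_C, ← mul_assoc, coeff_mul_C, coeff_mul_X]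

lemma coeff_pow_zero (N : ℕ) : ((C A + X * C B) ^ N).coeff 0 = A ^ N := by
  induction N with
  | zero => simp
  | succ N ih =>
    rw [pow_succ', add_mul, coeff_add, coeff_C_mul, mul_assoc, mul_coeff_zero, ih, pow_succ']
    simp

lemma S_zero_right (m : ℕ) : S m 0 A B = A ^ m := coeff_pow_zero A B m

lemma coeff_pow_of_lt (N q : ℕ) (h : N < q) : ((C A + X * C B) ^ N).coeff q = 0 := by
  induction N generalizing q with
  | zero => rw [pow_zero, coeff_one, if_neg (by omega)]
  | succ N ih =>
    obtain ⟨q, rfl⟩ : ∃ r, q = r + 1 := ⟨q - 1, by omega⟩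
    rw [coeff_pow_succ, ih _ (by omega), ih _ (by omega)]
    simp

/-- Words with `k + 1` letters `B`, sorted by the position of their leftmost `B`. -/
lemma S_succ (m k : ℕ) :
    S m (k + 1) A B = ∑ i ∈ range (m + 1), A ^ (m - i) * B * S i k A B := by
  induction m with
  | zero =>
    simp only [S, zero_add, range_one, sum_singleton, coeff_pow_succ]
    rw [coeff_pow_of_lt A B k (k + 1) (by omega)]
    simp
  | succ m ih =>
    have h : S (m + 1) (k + 1) A B = A * S m (k + 1) A B + B * S (m + 1) k A B := by
      simp only [S]
      rw [← add_assoc, coeff_pow_succ, show m + 1 + k = m + (k + 1) by ring]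
    rw [h, ih, sum_range_succ _ (m + 1), mul_sum]
    congr 1
    · refine sum_congr rfl fun i hi => ?_
      rw [show m + 1 - i = (m - i) + 1 by simp at hi; omega, pow_succ']
      simp only [mul_assoc]
    · simp

lemma S_isHermitian (hA : A.IsHermitian) (hB : B.IsHermitian) (m k : ℕ) :
    (S m k A B).IsHermitian := by
  have key : ∀ N q, (((C A + X * C B) ^ N).coeff q).IsHermitian := by
    intro N
    induction N with
    | zero =>
      intro q
      rw [pow_zero, coeff_one]
      split_ifs
      · exact isHermitian_one
      · exact isHermitian_zero
    | succ N ih =>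
      rintro (_ | q)
      · rw [coeff_pow_zero]; exact hA.pow _
      · rw [IsHermitian, coeff_pow_succ, conjTranspose_add, conjTranspose_mul, conjTranspose_mul,
          (ih _).eq, (ih _).eq, hA.eq, hB.eq, ← coeff_pow_succ', coeff_pow_succ]
  exact key _ _

lemma S_map (f : Matrix (Fin n) (Fin n) ℂ →+* Matrix (Fin n) (Fin n) ℂ) (m k : ℕ) :
    S m k (f A) (f B) = f (S m k A B) := by
  simp only [S]
  rw [← coeff_map]
  simp

end words

/-! ### Powers of Hermitian matrices -/

lemma pow_ne_zero_of_isHermitian {n : ℕ} {H : Matrix (Fin n) (Fin n) ℂ} (hH : H.IsHermitian)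
    (h0 : H ≠ 0) (k : ℕ) : H ^ k ≠ 0 := by
  -- `H ^ (2 ^ (j + 1)) = (H ^ (2 ^ j))ᴴ * H ^ (2 ^ j)` cannot vanish unless `H ^ (2 ^ j)` does
  have h2 : ∀ j : ℕ, H ^ (2 ^ j) ≠ 0 := by
    intro j
    induction j with
    | zero => simpa using h0
    | succ j ih =>
      intro h
      apply ih
      rw [← conjTranspose_mul_self_eq_zero, (hH.pow _).eq, ← pow_add, ← h]
      congr 1
      ring
  intro h
  exact h2 k (pow_eq_zero_of_le k.lt_two_pow_self.le h)

lemma trace_pow_pos {n : ℕ} {H : Matrix (Fin n) (Fin n) ℂ} (hH : H.PosSemidef)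
    (h0 : H ≠ 0) (k : ℕ) : 0 < (H ^ k).trace := by
  refine lt_of_le_of_ne (hH.pow k).trace_nonneg fun h => ?_
  exact pow_ne_zero_of_isHermitian hH.1 h0 k ((hH.pow k).trace_eq_zero_iff.1 h.symm)

/-! ### Asymptotics of the word sums -/

attribute [local instance] Matrix.linftyOpNormedRing Matrix.linftyOpNormedAlgebra

/-- Asymptotics of `S m (k + 1) A B` when, next to `B`, the powers of `A` agree with a sequence
`l ^ j • x j` such that `x j` converges. -/
lemma tendsto_S {n : ℕ} (A B P : Matrix (Fin n) (Fin n) ℂ) (x : ℕ → Matrix (Fin n) (Fin n) ℂ)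
    (l : ℝ) (hl : 0 < l) (hAB : ∀ j, A ^ j * B = l ^ j • (x j * B))
    (hBA : ∀ j, B * A ^ j = l ^ j • (B * x j)) (hx : Tendsto x atTop (𝓝 P)) (k : ℕ) :
    Tendsto (fun m => ((m + k + 1).choose (k + 1) : ℝ)⁻¹ • ((l ^ m)⁻¹ • S m (k + 1) A B)) atTop
      (𝓝 (P * (B * P) ^ (k + 1))) := by
  have hBS : ∀ k : ℕ, Tendsto (fun m => ((m + k).choose k : ℝ)⁻¹ • ((l ^ m)⁻¹ • (B * S m k A B)))
      atTop (𝓝 ((B * P) ^ (k + 1))) := by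
    intro k
    induction k with
    | zero =>
      have h : Tendsto (fun m => B * x m) atTop (𝓝 (B * P)) := hx.const_mul B
      simp only [zero_add, pow_one]
      refine h.congr fun m => ?_
      rw [S_zero_right, hBA, smul_smul (l ^ m)⁻¹, inv_mul_cancel₀ (pow_pos hl m).ne']
      simp
    | succ k ih =>
      have h : Tendsto (fun m => B * x m) atTop (𝓝 (B * P)) := hx.const_mul B
      rw [pow_succ']
      refine (tendsto_conv k _ _ _ _ h ih).congr fun m => ?_
      rw [add_assoc m k 1]
      congr 1
      rw [S_succ, mul_sum, smul_sum]
      refine sum_congr rfl fun i hi => ?_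
      have hlm : l ^ m = l ^ (m - i) * l ^ i := by
        rw [← pow_add, Nat.sub_add_cancel (by simp at hi; omega)]
      rw [mul_assoc (A ^ _), ← mul_assoc B (A ^ _), hBA, smul_mul_assoc, smul_smul, mul_smul_comm]
      congr 1
      rw [hlm]
      have := (pow_pos hl (m - i)).ne'
      have := (pow_pos hl i).ne'
      field_simp
  refine (tendsto_conv k _ _ _ _ hx (hBS k)).congr fun m => ?_
  congr 1
  rw [S_succ, smul_sum]
  refine sum_congr rfl fun i hi => ?_
  have hlm : l ^ m = l ^ (m - i) * l ^ i := by
    rw [← pow_add, Nat.sub_add_cancel (by simp at hi; omega)]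
  rw [hAB, smul_mul_assoc, smul_smul, mul_smul_comm, mul_assoc]
  congr 1
  rw [hlm]
  have := (pow_pos hl (m - i)).ne'
  have := (pow_pos hl i).ne'
  field_simp

/-- The data for `tendsto_S` when `A` is diagonal. Here `l` is the largest diagonal entry of `A`
at an index `i` with `B i i ≠ 0`, and `P` is the projection onto the indices attaining it. -/
lemma exists_limit_diagonal {n : ℕ} (a : Fin n → ℝ) (ha : ∀ i, 0 ≤ a i)
    (B : Matrix (Fin n) (Fin n) ℂ) (hB : B.PosSemidef)
    (hAB : 0 < (diagonal (fun i => (a i : ℂ)) * B).trace) :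
    ∃ (P : Matrix (Fin n) (Fin n) ℂ) (x : ℕ → Matrix (Fin n) (Fin n) ℂ) (l : ℝ), 0 < l ∧
      (∀ j, diagonal (fun i => (a i : ℂ)) ^ j * B = l ^ j • (x j * B)) ∧
      (∀ j, B * diagonal (fun i => (a i : ℂ)) ^ j = l ^ j • (B * x j)) ∧
      Tendsto x atTop (𝓝 P) ∧ P * P = P ∧ P.IsHermitian ∧ P * B * P ≠ 0 := by
  have hcol : ∀ i, B i i = 0 → ∀ j, B j i = 0 := by
    intro i hi j
    have h := (hB.dotProduct_mulVec_zero_iff (Pi.single i 1)).1 (by simpa using hi)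
    simpa using congrFun h j
  have hrow : ∀ i, B i i = 0 → ∀ j, B i j = 0 := by
    intro i hi j
    rw [← hB.1.apply i j, hcol i hi j, star_zero]
  have hex : ∃ i, B i i ≠ 0 ∧ 0 < a i := by
    by_contra! h
    refine hAB.ne' ?_
    simp only [trace, diag_apply, diagonal_mul]
    refine sum_eq_zero fun i _ => ?_
    by_cases hi : B i i = 0
    · simp [hi]
    · simp [le_antisymm (h i hi) (ha i)]
  obtain ⟨i₀, hi₀, hpos⟩ := hex
  obtain ⟨i₁, hi₁, hmax⟩ := exists_max_image (univ.filter fun i => B i i ≠ 0) a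
    ⟨i₀, by simpa using hi₀⟩
  simp only [mem_filter, mem_univ, true_and] at hi₁ hmax
  have hl : 0 < a i₁ := hpos.trans_le (hmax i₀ hi₀)
  set l := a i₁
  set b : Fin n → ℝ := fun i => if B i i = 0 then 0 else a i / l with hb
  have hbl : ∀ i, B i i ≠ 0 → ∀ j : ℕ, a i ^ j = l ^ j * b i ^ j := by
    intro i hi j
    simp only [hb, if_neg hi]
    rw [← mul_pow, mul_div_cancel₀ _ hl.ne']
  have hb0 : ∀ i, 0 ≤ b i := by
    intro i
    simp only [hb]
    split_ifs
    · exact le_rfl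
    · exact div_nonneg (ha i) hl.le
  have hb1 : ∀ i, b i ≤ 1 := by
    intro i
    simp only [hb]
    split_ifs with h
    · exact zero_le_one
    · exact (div_le_one hl).2 (hmax i h)
  refine ⟨diagonal fun i => if b i = 1 then 1 else 0, fun j => diagonal fun i => ((b i ^ j : ℝ) : ℂ),
    l, hl, ?_, ?_, ?_, ?_, ?_, ?_⟩
  · intro j
    ext r s
    rw [diagonal_pow, Matrix.smul_apply, diagonal_mul, diagonal_mul, Pi.pow_apply]
    by_cases h : B r r = 0
    · simp [hrow r h]
    · rw [← Complex.ofReal_pow, hbl r h j, Complex.real_smul]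
      push_cast; ring
  · intro j
    ext r s
    rw [diagonal_pow, Matrix.smul_apply, mul_diagonal, mul_diagonal, Pi.pow_apply]
    by_cases h : B s s = 0
    · simp [hcol s h]
    · rw [← Complex.ofReal_pow, hbl s h j, Complex.real_smul]
      push_cast; ring
  · refine tendsto_pi_nhds.2 fun r => tendsto_pi_nhds.2 fun s => ?_
    by_cases hrs : r = s
    · subst hrs
      simp only [diagonal_apply_eq]
      split_ifs with h
      · simp [h]
      · have := tendsto_pow_atTop_nhds_zero_of_lt_one (hb0 r) (lt_of_le_of_ne (hb1 r) h)
        simpa [Function.comp_def] using (Complex.continuous_ofReal.tendsto 0).comp this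
    · simp [diagonal_apply_ne _ hrs]
  · rw [diagonal_mul_diagonal]
    congr 1
    ext i
    split_ifs <;> simp
  · rw [IsHermitian, diagonal_conjTranspose]
    congr 1
    ext i
    simp only [Pi.star_apply]
    split_ifs <;> simp
  · intro h
    apply hi₁
    have h1 : b i₁ = 1 := by
      simp only [hb, if_neg hi₁]
      exact div_self hl.ne'
    simpa [mul_diagonal, diagonal_mul, h1] using congrFun (congrFun h i₁) i₁

/-- The trace of the limit in `tendsto_S` is `Tr ((P B P) ^ (k + 1)) > 0`, and `S m (k + 1) A B` has
real trace, so its trace is eventually positive. -/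
lemma eventually_trace_pos {n : ℕ} (A B P : Matrix (Fin n) (Fin n) ℂ)
    (x : ℕ → Matrix (Fin n) (Fin n) ℂ) (hA : A.IsHermitian) (hB : B.PosSemidef)
    (l : ℝ) (hl : 0 < l) (hAB : ∀ j, A ^ j * B = l ^ j • (x j * B))
    (hBA : ∀ j, B * A ^ j = l ^ j • (B * x j)) (hx : Tendsto x atTop (𝓝 P)) (hP : P * P = P)
    (hPh : P.IsHermitian) (hPB : P * B * P ≠ 0) (k : ℕ) :
    ∀ᶠ m in atTop, 0 < (S m (k + 1) A B).trace := by
  have hlim := tendsto_S A B P x l hl hAB hBA hx k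
  have hpow : ∀ j : ℕ, P * (B * P) ^ (j + 1) = (P * B * P) ^ (j + 1) := by
    intro j
    induction j with
    | zero => simp [mul_assoc]
    | succ j ih =>
      rw [pow_succ (B * P), ← mul_assoc P, ih, pow_succ _ (j + 1), pow_succ (P * B * P) j]
      simp only [mul_assoc]
      rw [← mul_assoc P P, hP]
  have hpsd : (P * B * P).PosSemidef := by
    have := hB.mul_mul_conjTranspose_same P
    rwa [hPh.eq] at this
  rw [hpow] at hlim
  have hpos := trace_pow_pos hpsd hPB (k + 1)
  have hre : Continuous fun M : Matrix (Fin n) (Fin n) ℂ => M.trace.re :=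
    Complex.continuous_re.comp continuous_id.matrix_trace
  have htr := (hre.tendsto _).comp hlim
  filter_upwards [htr.eventually (lt_mem_nhds (Complex.pos_iff.1 hpos).1)] with m hm
  have him : (S m (k + 1) A B).trace.im = 0 := by
    have h := trace_conjTranspose (S m (k + 1) A B)
    rw [(S_isHermitian A B hA hB.1 m (k + 1)).eq] at h
    exact Complex.conj_eq_iff_im.1 h.symm
  refine Complex.pos_iff.2 ⟨?_, him.symm⟩
  simp only [Function.comp, trace_smul, Complex.real_smul] at hm
  rw [Complex.re_ofReal_mul, Complex.re_ofReal_mul, ← mul_assoc] at hm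
  exact pos_of_mul_pos_right hm (by positivity)

/-! ### Reduction to diagonal `A` -/

/-- For Hermitian positive semidefinite `A, B` with `Tr(AB) > 0` and fixed `k`, the
coefficient `Tr(S_{m,k}(A,B))` of `t^k` in `Tr((A+tB)^{m+k})` is positive for all large `m`. -/
theorem stmt_0 {n : ℕ} (A B : Matrix (Fin n) (Fin n) ℂ)
    (hA : A.PosSemidef) (hB : B.PosSemidef) (hAB : 0 < (A * B).trace) (k : ℕ) :
    ∃ N : ℕ, ∀ m : ℕ, N < m → 0 < (S m k A B).trace := by
  rcases k with _ | k
  · refine ⟨0, fun m _ => ?_⟩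
    rw [S_zero_right]
    refine trace_pow_pos hA ?_ m
    rintro rfl
    simp at hAB
  -- conjugate by an eigenbasis of `A`
  set U := hA.1.eigenvectorUnitary
  set φ := Unitary.conjStarAlgAut ℂ (Matrix (Fin n) (Fin n) ℂ) U with hφ
  have htr : ∀ M, (φ M).trace = M.trace := by
    intro M
    rw [hφ, Unitary.conjStarAlgAut_apply, trace_mul_cycle, Unitary.coe_star_mul_self, one_mul]
  set D : Matrix (Fin n) (Fin n) ℂ := diagonal fun i => (hA.1.eigenvalues i : ℂ) with hD
  have hAD : A = φ D := hA.1.spectral_theorem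
  obtain ⟨B', rfl⟩ : ∃ B', φ B' = B := φ.surjective B
  have hB' : B'.PosSemidef := by
    have h := hB.conjTranspose_mul_mul_same (U : Matrix (Fin n) (Fin n) ℂ)
    have e : (U : Matrix (Fin n) (Fin n) ℂ)ᴴ * (U : Matrix (Fin n) (Fin n) ℂ) = 1 :=
      Unitary.coe_star_mul_self U
    have h2 : (U : Matrix (Fin n) (Fin n) ℂ)ᴴ * φ B' * (U : Matrix (Fin n) (Fin n) ℂ) = B' := by
      rw [hφ, Unitary.conjStarAlgAut_apply, star_eq_conjTranspose]
      simp only [mul_assoc]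
      rw [e, mul_one, ← mul_assoc, e, one_mul]
    rwa [h2] at h
  have hAB' : 0 < (D * B').trace := by
    rwa [← htr, map_mul, ← hAD]
  have hDh : D.IsHermitian := by
    rw [hD, IsHermitian, diagonal_conjTranspose]
    congr 1
    ext i
    simp
  obtain ⟨P, x, l, hl, h1, h2, h3, h4, h5, h6⟩ :=
    exists_limit_diagonal _ hA.eigenvalues_nonneg B' hB' hAB'
  obtain ⟨N, hN⟩ := eventually_atTop.1
    (eventually_trace_pos D B' P x hDh hB' l hl h1 h2 h3 h4 h5 h6 k)
  refine ⟨N, fun m hm => ?_⟩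
  have hS : S m (k + 1) A (φ B') = φ (S m (k + 1) D B') := by
    have := S_map D B' (φ : Matrix (Fin n) (Fin n) ℂ →+* Matrix (Fin n) (Fin n) ℂ) m (k + 1)
    rw [hAD]
    exact this
  rw [hS, htr]
  exact hN m hm.le
end

section
/- Let A and B be n×n Hermitian positive semidefinite complex matrices. If Tr(AB) = 0, then Tr(S_{m,k}(A,B)) = 0 for all integers m ≥ 1 and k ≥ 1. -/
/-!
For positive semidefinite `A = Cᴴ C` and `B = Dᴴ D`, cyclicity gives
`Tr(AB) = Tr((C Dᴴ)ᴴ (C Dᴴ))`, the squared Frobenius norm of `C Dᴴ`. If it vanishes then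
`C Dᴴ = 0`, so `AB = 0`, and by symmetry `BA = 0` (`mul_eq_zero_of_trace_mul_eq_zero`).
All mixed words in `(A + tB)^N` then vanish, so `(A + tB)^N = A^N + t^N B^N` for `N ≥ 1`
(`add_pow_of_orthogonal`), and no coefficient strictly between degrees `0` and `N` survives.
In particular `S m k A B` itself is zero, not only its trace.
-/

open Polynomial Matrix ComplexOrder

open scoped MatrixOrder in
theorem mul_eq_zero_of_trace_mul_eq_zero {n : ℕ} {A B : Matrix (Fin n) (Fin n) ℂ}
    (hA : A.PosSemidef) (hB : B.PosSemidef) (hAB : (A * B).trace = 0) : A * B = 0 := by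
  obtain ⟨C, rfl⟩ := CStarAlgebra.nonneg_iff_eq_star_mul_self.mp hA.nonneg
  obtain ⟨D, rfl⟩ := CStarAlgebra.nonneg_iff_eq_star_mul_self.mp hB.nonneg
  simp only [Matrix.star_eq_conjTranspose] at hAB ⊢
  have h : C * Dᴴ = 0 := by
    rw [← Matrix.trace_conjTranspose_mul_self_eq_zero_iff, ← hAB, Matrix.conjTranspose_mul,
      Matrix.conjTranspose_conjTranspose, Matrix.mul_assoc, Matrix.trace_mul_comm]
    simp only [Matrix.mul_assoc]
  calc Cᴴ * C * (Dᴴ * D) = Cᴴ * (C * Dᴴ) * D := by simp only [Matrix.mul_assoc]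
    _ = 0 := by simp [h]

theorem add_pow_of_orthogonal {R : Type*} [Semiring R] {a b : R} (hab : a * b = 0)
    (hba : b * a = 0) (N : ℕ) : (a + b) ^ (N + 1) = a ^ (N + 1) + b ^ (N + 1) := by
  induction N with
  | zero => simp
  | succ N ih =>
    have h₁ : a ^ (N + 1) * b = 0 := by rw [pow_succ, mul_assoc, hab, mul_zero]
    have h₂ : b ^ (N + 1) * a = 0 := by rw [pow_succ, mul_assoc, hba, mul_zero]
    rw [pow_succ, ih, mul_add, add_mul, add_mul, h₁, h₂, add_zero, zero_add, ← pow_succ,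
      ← pow_succ]

/-- If `A, B` are Hermitian positive semidefinite and `Tr(AB) = 0`, then
`Tr(S_{m,k}(A,B)) = 0` for all `m ≥ 1`, `k ≥ 1`. -/
theorem stmt_1 {n : ℕ} (A B : Matrix (Fin n) (Fin n) ℂ)
    (hA : A.PosSemidef) (hB : B.PosSemidef) (hAB : (A * B).trace = 0) :
    ∀ m k : ℕ, 1 ≤ m → 1 ≤ k → (S m k A B).trace = 0 := by
  intro m k hm hk
  have h₁ : A * B = 0 := mul_eq_zero_of_trace_mul_eq_zero hA hB hAB
  have h₂ : B * A = 0 :=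
    mul_eq_zero_of_trace_mul_eq_zero hB hA (by rw [Matrix.trace_mul_comm, hAB])
  have h₃ : C A * (X * C B) = 0 := by
    rw [← mul_assoc, ← X_mul_C, mul_assoc, ← C_mul, h₁, C_0, mul_zero]
  have h₄ : X * C B * C A = 0 := by
    rw [mul_assoc, ← C_mul, h₂, C_0, mul_zero]
  obtain ⟨N, hN⟩ : ∃ N, m + k = N + 1 := ⟨m + k - 1, by omega⟩
  have hS : S m k A B = 0 := by
    rw [S, hN, add_pow_of_orthogonal h₃ h₄, (commute_X (C B)).mul_pow, ← C_pow, ← C_pow,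
      coeff_add, coeff_X_pow_mul', coeff_C_of_ne_zero (by omega), ite_cond_eq_false, add_zero]
    simp only [eq_iff_iff, iff_false]
    omega
  rw [hS, Matrix.trace_zero]
end
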